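/- For every K ∈ T^d, the essential spectrum of the operator matrix H(K) coincides with the spectrum of the channel operator H_ch(K) and equals Σ_K: σ_ess(H(K)) = σ(H_ch(K)) = Σ_K = [m_K, M_K] ∪ Λ_K. -/

import Mathlib

open MeasureTheory Complex Filter Topology Set

noncomputable section

instance fact2pi : Fact (0 < 2 * Real.pi) := ⟨by positivity⟩

/-- The d-dimensional torus `(-π, π]^d` with its Haar (Lebesgue) measure. -/
abbrev Td (d : ℕ) : Type := Fin d → AddCircle (2 * Real.pi)

/-- The Hilbert space `L²(T^d)`. -/
abbrev L2 (d : ℕ) := Lp ℂ 2 (volume : Measure (Td d))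

/-- The Hilbert space `L²((T^d)²)`. -/
abbrev L2two (d : ℕ) := Lp ℂ 2 (volume : Measure (Td d × Td d))

/-- The swap map on `L²((T^d)²)`, `(S f)(p,q) = f(q,p)`. -/
def swapL (d : ℕ) : L2two d →ₗ[ℂ] L2two d :=
  Lp.compMeasurePreservingₗ ℂ Prod.swap MeasureTheory.Measure.measurePreserving_swap

/-- The subspace `L²_sym((T^d)²)` of symmetric functions, as the fixed-point space of swap. -/
def symSub (d : ℕ) : Submodule ℂ (L2two d) := LinearMap.ker (swapL d - LinearMap.id)

abbrev L2sym (d : ℕ) := ↥(symSub d)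

instance (d : ℕ) : CompleteSpace (L2sym d) := by
  have hiso : Isometry (swapL d) :=
    Lp.isometry_compMeasurePreserving MeasureTheory.Measure.measurePreserving_swap
  have hcl : IsClosed ((symSub d : Set (L2two d))) := by
    have h1 : (symSub d : Set (L2two d)) = {f | swapL d f = f} := by
      ext f
      simp [symSub, LinearMap.mem_ker, sub_eq_zero, LinearMap.sub_apply]
    rw [h1]
    exact isClosed_eq hiso.continuous continuous_id
  exact hcl.completeSpace_coe

/-- The Hilbert space `H = ℂ ⊕ L²(T^d) ⊕ L²_sym((T^d)²)`. -/
abbrev H3 (d : ℕ) := WithLp 2 (ℂ × WithLp 2 (L2 d × L2sym d))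

/-- The zero-particle component. -/
def p0 {d : ℕ} (f : H3 d) : ℂ := (WithLp.equiv 2 _ f).1

/-- The one-particle component. -/
def p1 {d : ℕ} (f : H3 d) : L2 d := (WithLp.equiv 2 _ ((WithLp.equiv 2 _ f).2)).1

/-- The two-particle component, as an element of `L²((T^d)²)`. -/
def p2 {d : ℕ} (f : H3 d) : L2two d :=
  ((WithLp.equiv 2 _ ((WithLp.equiv 2 _ f).2)).2 : L2sym d)

/-- The Hilbert space `L²(T^d) ⊕ L²((T^d)²)` on which the channel operator acts. -/
abbrev HchSp (d : ℕ) := WithLp 2 (L2 d × L2two d)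

def c1 {d : ℕ} (f : HchSp d) : L2 d := (WithLp.equiv 2 _ f).1

def c2 {d : ℕ} (f : HchSp d) : L2two d := (WithLp.equiv 2 _ f).2

/-- The essential spectrum of a bounded operator on a Hilbert space, via the Weyl criterion:
`λ ∈ σ_ess(A)` iff there is an orthonormal (singular) sequence `u` with `‖(A - λ)uₙ‖ → 0`. -/
def essSpec {H' : Type*} [NormedAddCommGroup H'] [InnerProductSpace ℂ H']
    (A : H' →L[ℂ] H') : Set ℂ :=
  {l | ∃ u : ℕ → H', Orthonormal ℂ u ∧
        Tendsto (fun n => ‖A (u n) - l • u n‖) atTop (𝓝 0)}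

variable {d : ℕ}

/-- `E_min(K,k) = min_q w₂(K; k, q)`. -/
def Emin (w₂ : Td d → Td d → Td d → ℝ) (K k : Td d) : ℝ := ⨅ q, w₂ K k q

/-- `E_max(K,k) = max_q w₂(K; k, q)`. -/
def Emax (w₂ : Td d → Td d → Td d → ℝ) (K k : Td d) : ℝ := ⨆ q, w₂ K k q

/-- `m_K = min_{p,q} w₂(K; p, q)`. -/
def mK (w₂ : Td d → Td d → Td d → ℝ) (K : Td d) : ℝ := ⨅ x : Td d × Td d, w₂ K x.1 x.2

/-- `M_K = max_{p,q} w₂(K; p, q)`. -/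
def MK (w₂ : Td d → Td d → Td d → ℝ) (K : Td d) : ℝ := ⨆ x : Td d × Td d, w₂ K x.1 x.2

/-- The Fredholm determinant
`Δ_K(k; z) = w₁(K,k) − z − (1/2) ∫ v₁(t)² / (w₂(K;k,t) − z) dt`. -/
def Delta (v₁ : Td d → ℝ) (w₁ : Td d → Td d → ℝ) (w₂ : Td d → Td d → Td d → ℝ)
    (K k : Td d) (z : ℂ) : ℂ :=
  (w₁ K k : ℂ) - z - (1 / 2) * ∫ t, (v₁ t : ℂ) ^ 2 / ((w₂ K k t : ℂ) - z)

/-- The interval `[E_min(K,k), E_max(K,k)]`, viewed inside `ℂ`. -/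
def bandKk (w₂ : Td d → Td d → Td d → ℝ) (K k : Td d) : Set ℂ :=
  Complex.ofReal '' Set.Icc (Emin w₂ K k) (Emax w₂ K k)

/-- The interval `[m_K, M_K]`, viewed inside `ℂ`. -/
def bigBand (w₂ : Td d → Td d → Td d → ℝ) (K : Td d) : Set ℂ :=
  Complex.ofReal '' Set.Icc (mK w₂ K) (MK w₂ K)

/-- The two-particle branch
`Λ_K = {z : ∃ k, z ∉ [E_min(K,k), E_max(K,k)] ∧ Δ_K(k; z) = 0}`. -/
def LamK (v₁ : Td d → ℝ) (w₁ : Td d → Td d → ℝ) (w₂ : Td d → Td d → Td d → ℝ)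
    (K : Td d) : Set ℂ :=
  {z | ∃ k, z ∉ bandKk w₂ K k ∧ Delta v₁ w₁ w₂ K k z = 0}

/-- `Σ_K = [m_K, M_K] ∪ Λ_K`. -/
def SigK (v₁ : Td d → ℝ) (w₁ : Td d → Td d → ℝ) (w₂ : Td d → Td d → Td d → ℝ)
    (K : Td d) : Set ℂ :=
  bigBand w₂ K ∪ LamK v₁ w₁ w₂ K

/-- The defining equations of the `3×3` operator matrix `H(K)` acting on
`ℂ ⊕ L²(T^d) ⊕ L²_sym((T^d)²)`:
`(H f)₀ = w₀(K) f₀ + ∫ v₀(t) f₁(t) dt`,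
`(H f)₁(p) = v₀(p) f₀ + w₁(K; p) f₁(p) + ∫ v₁(t) f₂(p,t) dt`,
`(H f)₂(p,q) = (1/2)(v₁(p) f₁(q) + v₁(q) f₁(p)) + w₂(K; p,q) f₂(p,q)`. -/
def IsHamiltonian {d : ℕ} (w₀ v₀ v₁ : Td d → ℝ) (w₁ : Td d → Td d → ℝ)
    (w₂ : Td d → Td d → Td d → ℝ) (K : Td d) (H : H3 d →L[ℂ] H3 d) : Prop :=
  ∀ f : H3 d,
    (p0 (H f) = (w₀ K : ℂ) * p0 f + (∫ t, (v₀ t : ℂ) * (p1 f) t)) ∧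
    (⇑(p1 (H f)) =ᵐ[volume] fun p =>
        (v₀ p : ℂ) * p0 f + (w₁ K p : ℂ) * (p1 f) p +
          (∫ t, (v₁ t : ℂ) * (p2 f) (p, t))) ∧
    (⇑(p2 (H f)) =ᵐ[volume] fun x : Td d × Td d =>
        ((v₁ x.1 : ℂ) * (p1 f) x.2 + (v₁ x.2 : ℂ) * (p1 f) x.1) / 2 +
          (w₂ K x.1 x.2 : ℂ) * (p2 f) x)

/-- The defining equations of the channel operator `H_ch(K)` acting on
`L²(T^d) ⊕ L²((T^d)²)`:
`(H_ch f)₁(p) = w₁(K; p) f₁(p) + (1/√2) ∫ v₁(t) f₂(p,t) dt`,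
`(H_ch f)₂(p,q) = (1/√2) v₁(q) f₁(p) + w₂(K; p,q) f₂(p,q)`. -/
def IsChannel {d : ℕ} (v₁ : Td d → ℝ) (w₁ : Td d → Td d → ℝ)
    (w₂ : Td d → Td d → Td d → ℝ) (K : Td d) (Hc : HchSp d →L[ℂ] HchSp d) : Prop :=
  ∀ f : HchSp d,
    (⇑(c1 (Hc f)) =ᵐ[volume] fun p =>
        (w₁ K p : ℂ) * (c1 f) p +
          (Real.sqrt 2 : ℂ)⁻¹ * (∫ t, (v₁ t : ℂ) * (c2 f) (p, t))) ∧
    (⇑(c2 (Hc f)) =ᵐ[volume] fun x : Td d × Td d =>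
        (Real.sqrt 2 : ℂ)⁻¹ * (v₁ x.2 : ℂ) * (c1 f) x.1 +
          (w₂ K x.1 x.2 : ℂ) * (c2 f) x)

lemma mk_clm {Y1 Y2 : Type*} [MeasurableSpace Y1] [MeasurableSpace Y2] {μ : Measure Y1} {ν : Measure Y2}
    (T : Lp ℂ 2 μ → Y2 → ℂ) (C : ℝ) (hC : 0 ≤ C)
    (hT : ∀ f, AEStronglyMeasurable (T f) ν)
    (hn : ∀ f : Lp ℂ 2 μ, eLpNorm (T f) 2 ν ≤ ENNReal.ofReal C * eLpNorm f 2 μ)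
    (hadd : ∀ f g, T (f + g) =ᵐ[ν] fun x => T f x + T g x)
    (hsmul : ∀ (c : ℂ) f, T (c • f) =ᵐ[ν] fun x => c * T f x) :
    ∃ A : Lp ℂ 2 μ →L[ℂ] Lp ℂ 2 ν, ∀ f, A f =ᵐ[ν] T f := by
  have hm : ∀ f, MemLp (T f) 2 ν := fun f =>
    ⟨hT f, (hn f).trans_lt (ENNReal.mul_lt_top ENNReal.ofReal_lt_top (Lp.memLp f).2)⟩
  let L : Lp ℂ 2 μ →ₗ[ℂ] Lp ℂ 2 ν :=
    { toFun := fun f => (hm f).toLp _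
      map_add' := by
        intro f g
        rw [← MemLp.toLp_add]
        exact MemLp.toLp_congr _ _ (hadd f g)
      map_smul' := by
        intro c f
        simp only [RingHom.id_apply]
        rw [← MemLp.toLp_const_smul]
        exact MemLp.toLp_congr _ _ (hsmul c f) }
  refine ⟨L.mkContinuous C ?_, ?_⟩
  · intro f
    change ‖(hm f).toLp _‖ ≤ _
    rw [Lp.norm_toLp, Lp.norm_def]
    have := ENNReal.toReal_mono (ENNReal.mul_lt_top ENNReal.ofReal_lt_top (Lp.memLp f).2).ne (hn f)
    rwa [ENNReal.toReal_mul, ENNReal.toReal_ofReal hC] at this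
  · intro f
    exact (hm f).coeFn_toLp

lemma exists_bd {Y : Type*} [TopologicalSpace Y] [CompactSpace Y] {a : Y → ℂ} (ha : Continuous a) :
    ∃ C : ℝ, 0 ≤ C ∧ ∀ x, ‖a x‖ ≤ C := by
  obtain ⟨C, hC⟩ := isCompact_univ.exists_bound_of_continuousOn (f := a) ha.continuousOn
  exact ⟨max C 0, le_max_right _ _, fun x => (hC x trivial).trans (le_max_left _ _)⟩

lemma exists_mulOp {Y : Type*} [TopologicalSpace Y] [CompactSpace Y] [MeasureSpace Y]
    [OpensMeasurableSpace Y] {a : Y → ℂ} (ha : Continuous a) :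
    ∃ M : Lp ℂ 2 (volume : Measure Y) →L[ℂ] Lp ℂ 2 (volume : Measure Y),
      ∀ f, M f =ᵐ[volume] fun x => a x * f x := by
  obtain ⟨C, hC, hb⟩ := exists_bd ha
  refine mk_clm (fun f x => a x * f x) C hC ?_ ?_ ?_ ?_
  · intro f
    exact ha.measurable.aestronglyMeasurable.mul (Lp.aestronglyMeasurable f)
  · intro f
    refine eLpNorm_le_mul_eLpNorm_of_ae_le_mul (Eventually.of_forall fun x => ?_) _
    rw [norm_mul]; gcongr; exact hb x
  · intro f g
    filter_upwards [Lp.coeFn_add f g] with x hx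
    rw [hx]; simp [mul_add]
  · intro c f
    filter_upwards [Lp.coeFn_smul c f] with x hx
    rw [hx]; simp; ring

/-- Cauchy–Schwarz for partial integration -/
lemma Iop_bound {X : Type*} [MeasureSpace X] [IsFiniteMeasure (volume : Measure X)]
    {b : X → ℂ} (hbm : Measurable b) {C : ℝ} (hC : ∫⁻ t, ‖b t‖ₑ ^ 2 ≤ ENNReal.ofReal C ^ 2)
    {g : X × X → ℂ} (hg : AEStronglyMeasurable g volume) :
    eLpNorm (fun p => ∫ t, b t * g (p, t)) 2 volume ≤ ENNReal.ofReal C * eLpNorm g 2 volume := by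
  have hcs : ∀ᵐ p, ‖∫ t, b t * g (p, t)‖ₑ ^ 2 ≤ ENNReal.ofReal C ^ 2 * ∫⁻ t, ‖g (p, t)‖ₑ ^ 2 := by
    have h1 : ∀ᵐ p, AEStronglyMeasurable (fun t => g (p, t)) volume := hg.prodMk_left
    filter_upwards [h1] with p hp
    have h2 : ‖∫ t, b t * g (p, t)‖ₑ ≤ ∫⁻ t, ‖b t‖ₑ * ‖g (p, t)‖ₑ := by
      refine (enorm_integral_le_lintegral_enorm _).trans (le_of_eq ?_)
      simp [enorm_mul]
    have h3 := ENNReal.lintegral_mul_le_Lp_mul_Lq (volume : Measure X) Real.HolderConjugate.two_two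
      hbm.enorm.aemeasurable hp.enorm
    have h4 : ∀ x : ENNReal, (x ^ (1 / 2 : ℝ)) ^ 2 = x := by
      intro x
      rw [← ENNReal.rpow_natCast, ← ENNReal.rpow_mul]; norm_num
    calc ‖∫ t, b t * g (p, t)‖ₑ ^ 2 ≤ _ := pow_le_pow_left' (h2.trans h3) 2
      _ = (∫⁻ t, ‖b t‖ₑ ^ 2) * ∫⁻ t, ‖g (p, t)‖ₑ ^ 2 := by
        rw [mul_pow, h4, h4]; simp
      _ ≤ _ := by gcongr
  have h5 : ∀ {Y : Type _} [MeasureSpace Y] (f : Y → ℂ), eLpNorm f 2 volume =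
      (∫⁻ x, ‖f x‖ₑ ^ 2) ^ (1 / 2 : ℝ) := by
    intro Y _ f
    rw [eLpNorm_eq_lintegral_rpow_enorm_toReal (by simp) (by simp)]
    simp
  have h6 : eLpNorm g 2 volume = (∫⁻ x, ‖g x‖ₑ ^ 2) ^ (1 / 2 : ℝ) := by
    rw [eLpNorm_eq_lintegral_rpow_enorm_toReal (by simp) (by simp)]
    simp
  rw [h5, h6]
  calc (∫⁻ p, ‖∫ t, b t * g (p, t)‖ₑ ^ 2) ^ (1 / 2 : ℝ)
      ≤ (∫⁻ p, ENNReal.ofReal C ^ 2 * ∫⁻ t, ‖g (p, t)‖ₑ ^ 2) ^ (1 / 2 : ℝ) := by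
        gcongr 1
        exact lintegral_mono_ae hcs
    _ = (ENNReal.ofReal C ^ 2 * ∫⁻ x, ‖g x‖ₑ ^ 2) ^ (1 / 2 : ℝ) := by
        rw [lintegral_const_mul' _ _ (by simp)]
        congr 2
        rw [Measure.volume_eq_prod]
        rw [lintegral_prod]
        exact hg.enorm.pow_const 2
    _ = _ := by
        rw [ENNReal.mul_rpow_of_nonneg _ _ (by norm_num)]
        congr 1
        rw [← ENNReal.rpow_natCast, ← ENNReal.rpow_mul]; norm_num

lemma ae_fib {X : Type*} [MeasureSpace X] [IsFiniteMeasure (volume : Measure X)]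
    {f g : X × X → ℂ} (h : f =ᵐ[volume] g) : ∀ᵐ p : X, ∀ᵐ t : X, f (p, t) = g (p, t) :=
  Measure.ae_ae_of_ae_prod h

lemma exists_Iop {X : Type*} [TopologicalSpace X] [CompactSpace X] [MeasureSpace X]
    [OpensMeasurableSpace X] [IsFiniteMeasure (volume : Measure X)]
    {b : X → ℂ} (hb : Continuous b) :
    ∃ I : Lp ℂ 2 (volume : Measure (X × X)) →L[ℂ] Lp ℂ 2 (volume : Measure X),
      ∀ f, I f =ᵐ[volume] fun p => ∫ t, b t * f (p, t) := by
  obtain ⟨C, hC, hbd⟩ := exists_bd hb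
  have hfin : ∫⁻ t, ‖b t‖ₑ ^ 2 ≠ ⊤ := by
    have : ∫⁻ t, ‖b t‖ₑ ^ 2 ≤ ∫⁻ t : X, ENNReal.ofReal C ^ 2 := by
      refine lintegral_mono fun t => ?_
      gcongr
      rw [← ofReal_norm]
      exact ENNReal.ofReal_le_ofReal (hbd t)
    refine ne_top_of_le_ne_top ?_ this
    rw [lintegral_const]
    exact ENNReal.mul_ne_top (by simp) (measure_ne_top _ _)
  set D := Real.sqrt (∫⁻ t, ‖b t‖ₑ ^ 2).toReal
  have hD : ∫⁻ t, ‖b t‖ₑ ^ 2 ≤ ENNReal.ofReal D ^ 2 := by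
    rw [← ENNReal.ofReal_pow (Real.sqrt_nonneg _), Real.sq_sqrt ENNReal.toReal_nonneg,
      ENNReal.ofReal_toReal hfin]
  have hint : ∀ f : Lp ℂ 2 (volume : Measure (X × X)),
      ∀ᵐ p, Integrable (fun t => b t * f (p, t)) := by
    intro f
    have h1 : Integrable (fun x : X × X => b x.2 * f x) volume :=
      ((Lp.memLp f).integrable (by norm_num)).bdd_mul (c := C)
        (hb.measurable.comp measurable_snd).aestronglyMeasurable
        (Eventually.of_forall fun x => hbd x.2)
    exact Integrable.prod_right_ae h1
  refine mk_clm (fun f p => ∫ t, b t * f (p, t)) D (Real.sqrt_nonneg _) ?_ ?_ ?_ ?_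
  · intro f
    have : AEStronglyMeasurable (fun x : X × X => b x.2 * f x) (volume.prod volume) :=
        (hb.measurable.comp measurable_snd).aestronglyMeasurable.mul (Lp.aestronglyMeasurable f)
    exact this.integral_prod_right'
  · intro f
    exact Iop_bound hb.measurable hD (Lp.aestronglyMeasurable f)
  · intro f g
    filter_upwards [ae_fib (Lp.coeFn_add f g), hint f, hint g] with p hp h1 h2
    rw [← integral_add h1 h2]
    refine integral_congr_ae ?_
    filter_upwards [hp] with t ht
    rw [ht]; simp [mul_add]
  · intro c f
    filter_upwards [ae_fib (Lp.coeFn_smul c f)] with p hp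
    rw [← integral_const_mul]
    refine integral_congr_ae ?_
    filter_upwards [hp] with t ht
    rw [ht]; simp; ring

/-- `φ ↦ φ(p)` -/
lemma exists_lift {X : Type*} [MeasureSpace X] [IsFiniteMeasure (volume : Measure X)] 
    {π : X × X → X} (hπ : Measurable π) 
    (hmap : Measure.map π volume = (volume : Measure X) univ • volume) :
    ∃ J : Lp ℂ 2 (volume : Measure X) →L[ℂ] Lp ℂ 2 (volume : Measure (X × X)),
      ∀ f, J f =ᵐ[volume] fun x => f (π x) := by
  have hq : Measure.QuasiMeasurePreserving π (volume : Measure (X × X)) (volume : Measure X) := by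
    refine ⟨hπ, ?_⟩
    rw [hmap]; exact Measure.smul_absolutelyContinuous
  refine mk_clm (fun f x => f (π x)) (((volume : Measure X) univ) ^ (1 / 2 : ℝ)).toReal
    ENNReal.toReal_nonneg ?_ ?_ ?_ ?_
  · intro f
    exact (Lp.aestronglyMeasurable f).comp_quasiMeasurePreserving hq
  · intro f
    have h1 : AEStronglyMeasurable f (Measure.map π volume) := by
      rw [hmap]; exact (Lp.aestronglyMeasurable f).mono_ac Measure.smul_absolutelyContinuous
    have := eLpNorm_map_measure (p := 2) h1 hπ.aemeasurable
    change eLpNorm (f ∘ π) _ _ ≤ _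
    rw [← this, hmap, eLpNorm_smul_measure_of_ne_top (by simp)]
    rw [ENNReal.ofReal_toReal]
    · simp
    · exact ENNReal.rpow_ne_top_of_nonneg (by norm_num) (measure_ne_top _ _)
  · intro f g
    exact hq.ae_eq_comp (Lp.coeFn_add f g)
  · intro c f
    exact hq.ae_eq_comp (Lp.coeFn_smul c f)

lemma map_fst_vol {X : Type*} [MeasureSpace X] [IsFiniteMeasure (volume : Measure X)] :
    Measure.map Prod.fst (volume : Measure (X × X)) = (volume : Measure X) univ • volume := by
  rw [Measure.volume_eq_prod, Measure.map_fst_prod]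
lemma map_snd_vol {X : Type*} [MeasureSpace X] [IsFiniteMeasure (volume : Measure X)] :
    Measure.map Prod.snd (volume : Measure (X × X)) = (volume : Measure X) univ • volume := by
  rw [Measure.volume_eq_prod, Measure.map_snd_prod]

lemma orthonormal_weak {E : Type*} [NormedAddCommGroup E] [InnerProductSpace ℂ E] {u : ℕ → E}
    (hu : Orthonormal ℂ u) (x : E) : Tendsto (fun n => inner ℂ x (u n)) atTop (𝓝 0) := by
  have h := (hu.inner_products_summable (x := x)).tendsto_atTop_zero
  rw [tendsto_zero_iff_norm_tendsto_zero]
  have h2 := h.sqrt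
  simp only [Real.sqrt_zero] at h2
  refine h2.congr fun n => ?_
  rw [Real.sqrt_sq (norm_nonneg _), norm_inner_symm]

lemma proj_weak {E : Type*} [NormedAddCommGroup E] [InnerProductSpace ℂ E] {u : ℕ → E}
    (hw : ∀ x, Tendsto (fun n => inner ℂ x (u n)) atTop (𝓝 0)) (F : Submodule ℂ E)
    [FiniteDimensional ℂ F] : Tendsto (fun n => F.starProjection (u n)) atTop (𝓝 0) := by
  have h : ∀ n, F.starProjection (u n) =
      ∑ i, inner ℂ ((stdOrthonormalBasis ℂ F i : F) : E) (u n) • ((stdOrthonormalBasis ℂ F i : F) : E) := by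
    intro n
    rw [(stdOrthonormalBasis ℂ F).starProjection_eq_sum_rankOne]
    simp
  simp_rw [h]
  have : (0 : E) = ∑ i, (0 : ℂ) • ((stdOrthonormalBasis ℂ F i : F) : E) := by simp
  rw [this]
  exact tendsto_finsetSum _ fun i _ => (hw _).smul_const _

lemma mem_essSpec_of_weak {E : Type*} [NormedAddCommGroup E] [InnerProductSpace ℂ E]
    (A : E →L[ℂ] E) (z : ℂ) (u : ℕ → E) (h1 : ∀ n, 1 ≤ ‖u n‖)
    (hw : ∀ x, Tendsto (fun n => inner ℂ x (u n)) atTop (𝓝 0))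
    (hA : Tendsto (fun n => ‖A (u n) - z • u n‖) atTop (𝓝 0)) : z ∈ essSpec A := by
  have key : ∀ (s : Finset E) (ε : ℝ), 0 < ε → ∃ y : E, ‖y‖ = 1 ∧ ‖A y - z • y‖ ≤ ε ∧
      ∀ x ∈ s, inner ℂ x y = 0 := by
    intro s ε hε
    let F := Submodule.span ℂ (s : Set E)
    have hP := proj_weak hw F
    have hP1 : Tendsto (fun n => ‖F.starProjection (u n)‖) atTop (𝓝 0) := by simpa using hP.norm
    have hP2 : Tendsto (fun n => ‖A (u n) - z • u n‖ +
        ‖A (F.starProjection (u n)) - z • F.starProjection (u n)‖) atTop (𝓝 0) := by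
      have h3 : Tendsto (fun n => A (F.starProjection (u n)) - z • F.starProjection (u n)) atTop (𝓝 0) := by
        have := ((A.continuous.tendsto 0).comp hP).sub (hP.const_smul z)
        simpa using this
      simpa using hA.add h3.norm
    obtain ⟨n, hn1, hn2⟩ := ((hP1.eventually (gt_mem_nhds (show (0:ℝ) < 1/2 by norm_num))).and
      (hP2.eventually (gt_mem_nhds (show (0:ℝ) < ε/2 by positivity)))).exists
    set y := u n - F.starProjection (u n) with hy
    have hyn : 1 / 2 ≤ ‖y‖ := by
      have := norm_sub_norm_le (u n) (F.starProjection (u n))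
      linarith [h1 n]
    have hy0 : ‖y‖ ≠ 0 := by linarith
    have hAy : ‖A y - z • y‖ ≤ ε / 2 := by
      have : A y - z • y = (A (u n) - z • u n) -
        (A (F.starProjection (u n)) - z • F.starProjection (u n)) := by
        rw [hy, map_sub, smul_sub]; abel
      rw [this]
      exact (norm_sub_le _ _).trans hn2.le
    refine ⟨((‖y‖⁻¹ : ℝ) : ℂ) • y, ?_, ?_, ?_⟩
    · rw [norm_smul]; simp [hy0]
    · rw [map_smul, smul_comm, ← smul_sub, norm_smul]
      simp only [norm_real, norm_inv, norm_norm]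
      have h2 : ‖y‖⁻¹ ≤ 2 := by
        rw [inv_le_comm₀ (by linarith) (by norm_num)]; linarith
      nlinarith [norm_nonneg (A y - z • y)]
    · intro x hx
      rw [inner_smul_right]
      have : y ∈ Fᗮ := F.sub_starProjection_mem_orthogonal (u n)
      rw [(Submodule.mem_orthogonal F y).1 this x (Submodule.subset_span hx), mul_zero]
  classical
  obtain ⟨f, hf1, hf2⟩ := exists_seq_of_forall_finset_exists
    (fun x : ℕ × E => ‖x.2‖ = 1 ∧ ‖A x.2 - z • x.2‖ ≤ 1 / ((x.1 : ℝ) + 1))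
    (fun x y => x.1 < y.1 ∧ inner ℂ x.2 y.2 = 0) (by
      intro s _
      obtain ⟨y, hy1, hy2, hy3⟩ := key (s.image Prod.snd) (1 / (((s.sup Prod.fst + 1 : ℕ) : ℝ) + 1))
        (by positivity)
      refine ⟨(s.sup Prod.fst + 1, y), ⟨hy1, hy2⟩, fun x hx => ⟨?_, ?_⟩⟩
      · have := Finset.le_sup (f := Prod.fst) hx
        simp only; omega
      · exact hy3 _ (Finset.mem_image_of_mem _ hx))
  refine ⟨fun n => (f n).2, ⟨fun n => (hf1 n).1, ?_⟩, ?_⟩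
  · intro m n hmn
    rcases lt_or_gt_of_ne hmn with h | h
    · exact (hf2 m n h).2
    · exact inner_eq_zero_symm.1 (hf2 n m h).2
  · have hmono : StrictMono fun n => (f n).1 := fun m n h => (hf2 m n h).1
    have := tendsto_one_div_add_atTop_nhds_zero_nat (𝕜 := ℝ)
    exact squeeze_zero (fun _ => norm_nonneg _) (fun n => (hf1 n).2) (this.comp hmono.tendsto_atTop)

lemma mem_spectrum_of_approx {E : Type*} [NormedAddCommGroup E] [NormedSpace ℂ E]
    (A : E →L[ℂ] E) (z : ℂ) (u : ℕ → E) (h1 : ∀ n, 1 ≤ ‖u n‖)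
    (hA : Tendsto (fun n => ‖A (u n) - z • u n‖) atTop (𝓝 0)) : z ∈ spectrum ℂ A := by
  intro hz
  obtain ⟨U, hU⟩ := hz
  set B : E →L[ℂ] E := (↑U⁻¹ : E →L[ℂ] E)
  have hB : ∀ x, B (z • x - A x) = x := by
    intro x
    have : B * (U : E →L[ℂ] E) = 1 := U.inv_mul
    rw [hU] at this
    have := congrArg (fun T : E →L[ℂ] E => T x) this
    simpa [Algebra.algebraMap_eq_smul_one] using this
  have h2 : Tendsto (fun n => ‖B‖ * ‖A (u n) - z • u n‖) atTop (𝓝 0) := by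
    simpa using hA.const_mul ‖B‖
  obtain ⟨n, hn⟩ := (h2.eventually (gt_mem_nhds one_pos)).exists
  have : ‖u n‖ ≤ ‖B‖ * ‖A (u n) - z • u n‖ := by
    conv_lhs => rw [← hB (u n)]
    rw [norm_sub_rev (A (u n))]
    exact B.le_opNorm _
  linarith [h1 n]

/-- normalised indicators -/
lemma exists_indic {Y : Type*} [MeasureSpace Y] [IsFiniteMeasure (volume : Measure Y)]
    (W : ℕ → Set Y) (hW : ∀ n, MeasurableSet (W n)) (h0 : ∀ n, volume (W n) ≠ 0)
    (hlim : Tendsto (fun n => volume (W n)) atTop (𝓝 0)) :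
    ∃ (h : ℕ → Lp ℂ 2 (volume : Measure Y)) (c : ℕ → ℂ), (∀ n, ‖h n‖ = 1) ∧
      (∀ n, h n =ᵐ[volume] (W n).indicator fun _ => c n) ∧
      (∀ x, Tendsto (fun n => inner ℂ x (h n)) atTop (𝓝 0)) := by
  let c : ℕ → ℂ := fun n => (((volume : Measure Y).real (W n) ^ (1 / 2 : ℝ))⁻¹ : ℝ)
  let h : ℕ → Lp ℂ 2 (volume : Measure Y) := fun n =>
    indicatorConstLp 2 (hW n) (measure_ne_top _ _) (c n)
  have hn : ∀ n, ‖h n‖ = 1 := by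
    intro n
    have hpos : 0 < (volume : Measure Y).real (W n) :=
      ENNReal.toReal_pos (h0 n) (measure_ne_top _ _)
    rw [norm_indicatorConstLp (by simp) (by simp)]
    have : 0 < (volume : Measure Y).real (W n) ^ (1 / 2 : ℝ) := Real.rpow_pos_of_pos hpos _
    simp only [c, ENNReal.toReal_ofNat, norm_real, norm_inv, Real.norm_eq_abs, abs_of_pos this]
    field_simp
  have hae : ∀ n, h n =ᵐ[volume] (W n).indicator fun _ => c n := fun n => indicatorConstLp_coeFn
  refine ⟨h, c, hn, hae, ?_⟩
  intro x
  rw [Metric.tendsto_nhds]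
  intro ε hε
  obtain ⟨δ, hδ, hδ2⟩ := (Lp.memLp x).eLpNorm_indicator_le (by norm_num) (by simp)
    (show 0 < ε / 2 by positivity)
  have hev := hlim.eventually (gt_mem_nhds (show 0 < ENNReal.ofReal δ by simpa using hδ))
  filter_upwards [hev] with n hn1
  have hm : MemLp ((W n).indicator x) 2 volume := (Lp.memLp x).indicator (hW n)
  have heq : inner ℂ x (h n) = inner ℂ (hm.toLp _) (h n) := by
    rw [L2.inner_def, L2.inner_def]
    refine integral_congr_ae ?_
    filter_upwards [hm.coeFn_toLp, hae n] with y hy hy2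
    rw [hy, hy2]
    by_cases hyW : y ∈ W n <;> simp [hyW]
  rw [dist_zero_right, heq]
  calc _ ≤ ‖hm.toLp _‖ * ‖h n‖ := norm_inner_le_norm _ _
    _ ≤ ε / 2 := by
      rw [hn n, mul_one, Lp.norm_toLp]
      exact ENNReal.toReal_le_of_le_ofReal (by positivity) (hδ2 _ (hW n) hn1.le)
    _ < ε := by linarith

lemma mul_indic {Y : Type*} [MeasureSpace Y] 
    {W : ℕ → Set Y} {h : ℕ → Lp ℂ 2 (volume : Measure Y)} {c : ℕ → ℂ} (hn : ∀ n, ‖h n‖ = 1)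
    (hae : ∀ n, h n =ᵐ[volume] (W n).indicator fun _ => c n) 
    {a : Y → ℂ} (ha : ∀ ε > 0, ∀ᶠ n in atTop, ∀ x ∈ W n, ‖a x‖ ≤ ε)
    {g : ℕ → Lp ℂ 2 (volume : Measure Y)} (hg : ∀ n, g n =ᵐ[volume] fun x => a x * h n x) :
    Tendsto g atTop (𝓝 0) := by
  rw [Metric.tendsto_nhds]
  intro ε hε
  filter_upwards [ha (ε / 2) (by positivity)] with n hx
  rw [dist_zero_right]
  have : ‖g n‖ ≤ ε / 2 * ‖h n‖ := by
    apply Lp.norm_le_mul_norm_of_ae_le_mul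
    filter_upwards [hg n, hae n] with y h1 h2
    rw [h1, norm_mul]
    by_cases hy : y ∈ W n
    · gcongr; exact hx y hy
    · simp [h2, hy]
  rw [hn n] at this
  linarith

/-- integration against a continuous function is an inner product -/
lemma exists_ker {X : Type*} [TopologicalSpace X] [CompactSpace X] [MeasureSpace X]
    [OpensMeasurableSpace X] [IsFiniteMeasure (volume : Measure X)]
    {b : X → ℂ} (hb : Continuous b) {C : ℝ} (hC : 0 ≤ C) (hbd : ∀ x, ‖b x‖ ≤ C) :
    ∃ k : Lp ℂ 2 (volume : Measure X), (∀ f : Lp ℂ 2 (volume : Measure X), ∫ t, b t * f t = inner ℂ k f) ∧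
      ‖k‖ ≤ measureUnivNNReal (volume : Measure X) ^ ((2 : ENNReal).toReal⁻¹) * C := by
  have hm : MemLp (fun t => (starRingEnd ℂ) (b t)) 2 (volume : Measure X) := by
    refine MemLp.of_bound (continuous_conj.comp hb).measurable.aestronglyMeasurable C
      (Eventually.of_forall fun x => ?_)
    simpa using hbd x
  refine ⟨hm.toLp _, ?_, ?_⟩
  · intro f
    rw [L2.inner_def]
    refine integral_congr_ae ?_
    filter_upwards [hm.coeFn_toLp] with y hy
    rw [hy]; simp [mul_comm]
  · refine Lp.norm_le_of_ae_bound hC ?_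
    filter_upwards [hm.coeFn_toLp] with y hy
    rw [hy]; simpa using hbd y

lemma ker_weak {X : Type*} [TopologicalSpace X] [CompactSpace X] [MeasureSpace X]
    [OpensMeasurableSpace X] [IsFiniteMeasure (volume : Measure X)]
    {k : X × X → ℂ} (hk : Continuous k) {f : ℕ → Lp ℂ 2 (volume : Measure X)} {c : ℝ}
    (hf : ∀ n, ‖f n‖ ≤ c)
    (hw : ∀ x, Tendsto (fun n => inner ℂ x (f n)) atTop (𝓝 0))
    {g : ℕ → Lp ℂ 2 (volume : Measure X)}
    (hg : ∀ n, g n =ᵐ[volume] fun p => ∫ t, k (p, t) * f n t) : Tendsto g atTop (𝓝 0) := by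
  obtain ⟨C, hC, hbd⟩ := exists_bd hk
  set D := measureUnivNNReal (volume : Measure X) ^ ((2 : ENNReal).toReal⁻¹) * C with hD
  have hkp : ∀ p, Continuous fun t => k (p, t) := fun p => by fun_prop
  have hpt : ∀ p, Tendsto (fun n => ∫ t, k (p, t) * f n t) atTop (𝓝 0) := by
    intro p
    obtain ⟨κ, h1, -⟩ := exists_ker (hkp p) hC (fun t => hbd (p, t))
    simp_rw [h1]; exact hw κ
  have hb : ∀ n p, ‖∫ t, k (p, t) * f n t‖ ≤ D * c := by
    intro n p
    obtain ⟨κ, h1, h2⟩ := exists_ker (hkp p) hC (fun t => hbd (p, t))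
    rw [h1]
    refine (norm_inner_le_norm _ _).trans ?_
    have := norm_nonneg κ
    exact mul_le_mul h2 (hf n) (norm_nonneg _) (this.trans h2)
  have hlim : Tendsto (fun n => ∫ p, ‖g n p‖ ^ 2) atTop (𝓝 (∫ p : X, (0 : ℝ))) := by
    refine tendsto_integral_of_dominated_convergence (fun _ => (D * c) ^ 2) ?_ (integrable_const _) ?_ ?_
    · intro n
      exact (Lp.aestronglyMeasurable (g n)).norm.pow 2
    · intro n
      filter_upwards [hg n] with p hp
      rw [hp, norm_pow, norm_norm]
      exact pow_le_pow_left₀ (norm_nonneg _) (hb n p) 2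
    · filter_upwards [ae_all_iff.2 hg] with p hp
      simp_rw [hp]
      simpa using (hpt p).norm.pow 2
  rw [tendsto_zero_iff_norm_tendsto_zero]
  have h2 := hlim.sqrt
  simp only [integral_zero, Real.sqrt_zero] at h2
  refine h2.congr fun n => ?_
  rw [Real.sqrt_eq_iff_eq_sq (integral_nonneg fun _ => by positivity) (norm_nonneg _)]
  have := @inner_self_eq_norm_sq_to_K ℂ _ _ _ _ (g n)
  rw [L2.inner_def] at this
  have h3 : ∫ a, inner ℂ (g n a) (g n a) = ((∫ p, ‖g n p‖ ^ 2 : ℝ) : ℂ) := by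
    rw [← integral_complex_ofReal]
    refine integral_congr_ae (Eventually.of_forall fun p => ?_)
    simp only
    rw [inner_self_eq_norm_sq_to_K]
    norm_cast
  rw [h3] at this
  exact Complex.ofReal_injective (by rw [this]; simp)

section conc
variable {X : Type*} [MetricSpace X] [CompactSpace X] [SecondCountableTopology X] [MeasureSpace X]
  [BorelSpace X] [IsFiniteMeasure (volume : Measure X)] [Measure.IsOpenPosMeasure (volume : Measure X)]
  [NullSingletonClass (volume : Measure X)]

def rad (n : ℕ) : ℝ := 1 / ((n : ℝ) + 1)
lemma rad_pos (n : ℕ) : 0 < rad n := by unfold rad; positivity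
lemma rad_tendsto : Tendsto rad atTop (𝓝 0) := tendsto_one_div_add_atTop_nhds_zero_nat

lemma ball_meas (x : X) : Tendsto (fun n => volume (Metric.ball x (rad n))) atTop (𝓝 0) := by
  have h := tendsto_measure_thickening_of_isClosed (μ := (volume : Measure X)) (s := {x})
    ⟨1, one_pos, measure_ne_top _ _⟩ isClosed_singleton
  rw [measure_singleton] at h
  simp_rw [Metric.thickening_singleton] at h
  refine h.comp ?_
  rw [tendsto_nhdsWithin_iff]
  exact ⟨rad_tendsto, Eventually.of_forall rad_pos⟩

lemma ball_small {Y : Type*} [PseudoMetricSpace Y] {a : Y → ℂ} {y : Y} (ha : ContinuousAt a y) (h0 : a y = 0)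
    {ε : ℝ} (hε : 0 < ε) : ∀ᶠ n in atTop, ∀ x ∈ Metric.ball y (rad n), ‖a x‖ ≤ ε := by
  obtain ⟨δ, hδ, h⟩ := Metric.continuousAt_iff.1 ha ε hε
  filter_upwards [rad_tendsto.eventually (gt_mem_nhds hδ)] with n hn x hx
  have := h ((Metric.mem_ball.1 hx).trans hn)
  rw [h0, dist_zero_right] at this
  exact this.le

lemma conc1 (x₀ : X) : ∃ f : ℕ → Lp ℂ 2 (volume : Measure X), (∀ n, ‖f n‖ = 1) ∧
    (∀ x, Tendsto (fun n => inner ℂ x (f n)) atTop (𝓝 0)) ∧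
    ∀ a : X → ℂ, ContinuousAt a x₀ → a x₀ = 0 → ∀ g : ℕ → Lp ℂ 2 (volume : Measure X),
      (∀ n, g n =ᵐ[volume] fun x => a x * f n x) → Tendsto g atTop (𝓝 0) := by
  obtain ⟨h, c, h1, h2, h3⟩ := exists_indic (fun n => Metric.ball x₀ (rad n))
    (fun n => Metric.isOpen_ball.measurableSet)
    (fun n => (Metric.measure_ball_pos volume x₀ (rad_pos n)).ne') (ball_meas x₀)
  refine ⟨h, h1, h3, fun a ha h0 g hg => mul_indic h1 h2 (fun ε hε => ball_small ha h0 hε) hg⟩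

lemma conc2 (p₀ q₀ : X) : ∃ f : ℕ → Lp ℂ 2 (volume : Measure (X × X)), (∀ n, ‖f n‖ = 1) ∧
    (∀ x, Tendsto (fun n => inner ℂ x (f n)) atTop (𝓝 0)) ∧
    (∀ n, (fun x => f n x.swap) =ᵐ[volume] f n) ∧
    (∀ a : X × X → ℂ, Continuous a → a (p₀, q₀) = 0 → a (q₀, p₀) = 0 →
      ∀ g : ℕ → Lp ℂ 2 (volume : Measure (X × X)),
      (∀ n, g n =ᵐ[volume] fun x => a x * f n x) → Tendsto g atTop (𝓝 0)) ∧
    (∀ b : X → ℂ, Continuous b → ∀ g : ℕ → Lp ℂ 2 (volume : Measure X), 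
      (∀ n, g n =ᵐ[volume] fun p => ∫ t, b t * f n (p, t)) → Tendsto g atTop (𝓝 0)) := by
  let B : X → ℕ → Set X := fun x n => Metric.ball x (rad n)
  let W : ℕ → Set (X × X) := fun n => B p₀ n ×ˢ B q₀ n ∪ B q₀ n ×ˢ B p₀ n
  let V : ℕ → Set X := fun n => B p₀ n ∪ B q₀ n
  have hWo : ∀ n, IsOpen (W n) := fun n =>
    (Metric.isOpen_ball.prod Metric.isOpen_ball).union (Metric.isOpen_ball.prod Metric.isOpen_ball)
  have hVm : ∀ n, MeasurableSet (V n) := fun n =>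
    Metric.isOpen_ball.measurableSet.union Metric.isOpen_ball.measurableSet
  have hWV : ∀ n, W n ⊆ univ ×ˢ V n := by
    rintro n x (hx | hx)
    · exact ⟨trivial, Or.inr hx.2⟩
    · exact ⟨trivial, Or.inl hx.2⟩
  have hVlim : Tendsto (fun n => volume (V n)) atTop (𝓝 0) := by
    refine tendsto_of_tendsto_of_tendsto_of_le_of_le tendsto_const_nhds
      (h := fun n => volume (B p₀ n) + volume (B q₀ n)) ?_ (fun _ => zero_le) (fun n => measure_union_le _ _)
    simpa using (ball_meas p₀).add (ball_meas q₀)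
  have hWlim : Tendsto (fun n => volume (W n)) atTop (𝓝 0) := by
    refine tendsto_of_tendsto_of_tendsto_of_le_of_le tendsto_const_nhds
      (h := fun n => (volume : Measure X) univ * volume (V n)) ?_ (fun _ => zero_le)
      (fun n => (measure_mono (hWV n)).trans (by rw [Measure.volume_eq_prod, Measure.prod_prod]))
    simpa using ENNReal.Tendsto.const_mul hVlim (Or.inr (measure_ne_top _ _))
  obtain ⟨h, c, h1, h2, h3⟩ := exists_indic W (fun n => (hWo n).measurableSet)
    (fun n => ((hWo n).measure_pos volume ⟨(p₀, q₀), Or.inl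
      ⟨Metric.mem_ball_self (rad_pos n), Metric.mem_ball_self (rad_pos n)⟩⟩).ne') hWlim
  refine ⟨h, h1, h3, ?_, ?_, ?_⟩
  · intro n
    have hs : MeasurePreserving Prod.swap (volume : Measure (X × X)) (volume : Measure (X × X)) :=
      Measure.measurePreserving_swap
    have := hs.quasiMeasurePreserving.ae_eq_comp (h2 n)
    refine this.trans (EventuallyEq.trans ?_ (h2 n).symm)
    refine Eventually.of_forall fun x => ?_
    have : x.swap ∈ W n ↔ x ∈ W n := by
      simp only [W, mem_union, mem_prod, Prod.fst_swap, Prod.snd_swap]; tauto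
    by_cases hx : x ∈ W n
    · simp [hx, this.2 hx]
    · simp [hx, mt this.1 hx]
  · intro a ha h0 h0' g hg
    refine mul_indic h1 h2 (fun ε hε => ?_) hg
    filter_upwards [ball_small ha.continuousAt h0 hε, ball_small ha.continuousAt h0' hε] with n hn hn'
    rintro x (hx | hx)
    · exact hn x (by rw [← ball_prod_same]; exact hx)
    · exact hn' x (by rw [← ball_prod_same]; exact hx)
  · intro b hb g hg
    obtain ⟨C, hC, hbd⟩ := exists_bd hb
    have hg2 : ∀ n, g n =ᵐ[volume] fun p => ∫ t, (V n).indicator b t * h n (p, t) := by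
      intro n
      refine (hg n).trans ?_
      filter_upwards [ae_fib (h2 n)] with p hp
      refine integral_congr_ae ?_
      filter_upwards [hp] with t ht
      by_cases htV : t ∈ V n
      · simp [htV]
      · have : (p, t) ∉ W n := fun hh => htV (hWV n hh).2
        simp [ht, this]
    have hbound : ∀ n, ‖g n‖ ≤ C * Real.sqrt ((volume : Measure X).real (V n)) := by
      intro n
      have := Iop_bound (hb.measurable.indicator (hVm n)) (C := C * Real.sqrt ((volume : Measure X).real (V n)))
        ?_ (Lp.aestronglyMeasurable (h n))
      · rw [← eLpNorm_congr_ae (hg2 n)] at this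
        rw [Lp.norm_def]
        refine ENNReal.toReal_le_of_le_ofReal (by positivity) (this.trans (le_of_eq ?_))
        have h5 : eLpNorm (h n) 2 volume = 1 := by
          have := h1 n
          rw [Lp.norm_def] at this
          exact (ENNReal.toReal_eq_one_iff _).1 this
        rw [h5, mul_one]
      · calc ∫⁻ t, ‖(V n).indicator b t‖ₑ ^ 2 ≤ ∫⁻ t, (V n).indicator (fun _ => ENNReal.ofReal C ^ 2) t := by
              refine lintegral_mono fun t => ?_
              by_cases ht : t ∈ V n
              · simp only [ht, indicator_of_mem]
                gcongr
                rw [← ofReal_norm]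
                exact ENNReal.ofReal_le_ofReal (hbd t)
              · simp [ht]
          _ = ENNReal.ofReal C ^ 2 * volume (V n) := by
              rw [lintegral_indicator (hVm n)]; simp
          _ = _ := by
              rw [ENNReal.ofReal_mul hC, mul_pow, ← ENNReal.ofReal_pow (Real.sqrt_nonneg _),
                Real.sq_sqrt (by positivity), ofReal_measureReal]
    rw [tendsto_zero_iff_norm_tendsto_zero]
    refine squeeze_zero (fun _ => norm_nonneg _) hbound ?_
    have h6 : Tendsto (fun n => (volume : Measure X).real (V n)) atTop (𝓝 0) := by
      have := (ENNReal.tendsto_toReal ENNReal.zero_ne_top).comp hVlim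
      rw [ENNReal.toReal_zero] at this
      exact this
    simpa using h6.sqrt.const_mul C
end conc

lemma chan_not_spec {E F : Type*} [NormedAddCommGroup E] [NormedSpace ℂ E] [CompleteSpace E]
    [NormedAddCommGroup F] [NormedSpace ℂ F] [CompleteSpace F]
    (Hc : WithLp 2 (E × F) →L[ℂ] WithLp 2 (E × F)) (M : E →L[ℂ] E) (I : F →L[ℂ] E) (J : E →L[ℂ] F)
    (W R : F →L[ℂ] F) (Q : E →L[ℂ] E) (s z : ℂ)
    (h1 : ∀ f, (Hc f).fst = M f.fst + s • I f.snd)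
    (h2 : ∀ f, (Hc f).snd = s • J f.fst + W f.snd)
    (hR1 : ∀ g, R (W g - z • g) = g) (hR2 : ∀ g, W (R g) - z • R g = g)
    (hQ1 : ∀ f, Q (M f - z • f - s ^ 2 • I (R (J f))) = f)
    (hQ2 : ∀ f, M (Q f) - z • Q f - s ^ 2 • I (R (J (Q f))) = f) : z ∉ spectrum ℂ Hc := by
  rw [spectrum.notMem_iff]
  rw [ContinuousLinearMap.isUnit_iff_bijective]
  have hap : ∀ f, (algebraMap ℂ (WithLp 2 (E × F) →L[ℂ] WithLp 2 (E × F)) z - Hc) f = z • f - Hc f := by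
    intro f; simp [Algebra.algebraMap_eq_smul_one]
  constructor
  · rw [injective_iff_map_eq_zero]
    intro f hf
    rw [hap, sub_eq_zero] at hf
    have e1 := h1 f
    have e2 := h2 f
    rw [← hf] at e1 e2
    simp only [WithLp.smul_fst, WithLp.smul_snd] at e1 e2
    have e3 : f.snd = - (s • R (J f.fst)) := by
      rw [← hR1 f.snd, e2]; simp
    have e4 : f.fst = 0 := by
      rw [← hQ1 f.fst, e1]
      have : M f.fst - (M f.fst + s • I f.snd) - s ^ 2 • I (R (J f.fst)) = 0 := by
        rw [e3]; simp [smul_smul, pow_two]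
      rw [this, map_zero]
    have e5 : f.snd = 0 := by rw [e3, e4]; simp
    apply (WithLp.equiv 2 (E × F)).injective
    exact Prod.ext e4 e5
  · intro g
    let f1 : E := Q (- g.fst + s • I (R g.snd))
    let f2 : F := - R (g.snd + s • J f1)
    refine ⟨WithLp.toLp 2 (f1, f2), ?_⟩
    rw [hap]
    have e1 := h1 (WithLp.toLp 2 (f1, f2))
    have e2 := h2 (WithLp.toLp 2 (f1, f2))
    simp only [WithLp.toLp_fst, WithLp.toLp_snd] at e1 e2
    have k1 : (z • (WithLp.toLp 2 (f1, f2)) - Hc (WithLp.toLp 2 (f1, f2))).fst = g.fst := by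
      rw [WithLp.sub_fst, WithLp.smul_fst, e1]
      have := hQ2 (- g.fst + s • I (R g.snd))
      change M f1 - z • f1 - s ^ 2 • I (R (J f1)) = _ at this
      have e7 : I f2 = - I (R g.snd) - s • I (R (J f1)) := by
        simp only [f2, map_neg, map_add, map_smul]; abel
      simp only [WithLp.toLp_fst]
      rw [e7]
      have e8 : g.fst = s • I (R g.snd) - (M f1 - z • f1 - s ^ 2 • I (R (J f1))) := by
        rw [this]; abel
      rw [e8]
      module
    have k2 : (z • (WithLp.toLp 2 (f1, f2)) - Hc (WithLp.toLp 2 (f1, f2))).snd = g.snd := by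
      rw [WithLp.sub_snd, WithLp.smul_snd, e2]
      have := hR2 (g.snd + s • J f1)
      simp only [f2, map_neg, WithLp.toLp_snd]
      have e8 : g.snd = (g.snd + s • J f1) - s • J f1 := by abel
      conv_rhs => rw [e8]
      conv_rhs => enter [1]; rw [← this]
      module
    apply (WithLp.equiv 2 (E × F)).injective
    exact Prod.ext k1 k2

lemma tendsto_pair {E F : Type*} [NormedAddCommGroup E] [NormedAddCommGroup F]
    {x : ℕ → WithLp 2 (E × F)} (h1 : Tendsto (fun n => (x n).fst) atTop (𝓝 0))
    (h2 : Tendsto (fun n => (x n).snd) atTop (𝓝 0)) : Tendsto x atTop (𝓝 0) := by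
  have := (h1.norm.pow 2).add (h2.norm.pow 2)
  rw [tendsto_zero_iff_norm_tendsto_zero]
  have h3 := this.sqrt
  simp only [norm_zero] at h3
  have h4 : √((0:ℝ) ^ 2 + 0 ^ 2) = 0 := by simp
  rw [h4] at h3
  refine h3.congr fun n => ?_
  rw [← WithLp.prod_norm_sq_eq_of_L2, Real.sqrt_sq (norm_nonneg _)]

lemma chan_spec_Lam {E F : Type*} [NormedAddCommGroup E] [NormedSpace ℂ E] 
    [NormedAddCommGroup F] [NormedSpace ℂ F] 
    (Hc : WithLp 2 (E × F) →L[ℂ] WithLp 2 (E × F)) (M : E →L[ℂ] E) (I : F →L[ℂ] E) (J : E →L[ℂ] F)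
    (W R : F →L[ℂ] F) (s z : ℂ)
    (h1 : ∀ f, (Hc f).fst = M f.fst + s • I f.snd)
    (h2 : ∀ f, (Hc f).snd = s • J f.fst + W f.snd)
    (hR2 : ∀ g, W (R g) - z • R g = g) (f : ℕ → E) (hf : ∀ n, ‖f n‖ = 1)
    (hS : Tendsto (fun n => M (f n) - z • f n - s ^ 2 • I (R (J (f n)))) atTop (𝓝 0)) :
    z ∈ spectrum ℂ Hc := by
  refine mem_spectrum_of_approx Hc z (fun n => WithLp.toLp 2 (f n, - (s • R (J (f n))))) ?_ ?_
  · intro n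
    have := WithLp.prod_norm_sq_eq_of_L2 (WithLp.toLp 2 (f n, - (s • R (J (f n)))))
    simp only [WithLp.toLp_fst, hf n] at this
    by_contra hlt
    push Not at hlt
    nlinarith [norm_nonneg (WithLp.toLp 2 (f n, - (s • R (J (f n))))), sq_nonneg ‖(WithLp.toLp 2 (f n, - (s • R (J (f n))))).snd‖]
  · refine tendsto_zero_iff_norm_tendsto_zero.1 (tendsto_pair ?_ ?_)
    · refine hS.congr fun n => ?_
      rw [WithLp.sub_fst, WithLp.smul_fst, h1]
      simp only [WithLp.toLp_fst, WithLp.toLp_snd, map_neg, map_smul]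
      module
    · refine tendsto_const_nhds.congr fun n => ?_
      rw [WithLp.sub_snd, WithLp.smul_snd, h2]
      have := hR2 (J (f n))
      simp only [WithLp.toLp_fst, WithLp.toLp_snd, map_neg, map_smul]
      conv_rhs => enter [1, 1]; rw [← this]
      module

lemma chan_spec_band {E F : Type*} [NormedAddCommGroup E] [NormedSpace ℂ E] 
    [NormedAddCommGroup F] [NormedSpace ℂ F] 
    (Hc : WithLp 2 (E × F) →L[ℂ] WithLp 2 (E × F)) (M : E →L[ℂ] E) (I : F →L[ℂ] E) (J : E →L[ℂ] F)
    (W : F →L[ℂ] F) (s z : ℂ)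
    (h1 : ∀ f, (Hc f).fst = M f.fst + s • I f.snd)
    (h2 : ∀ f, (Hc f).snd = s • J f.fst + W f.snd)
    (g : ℕ → F) (hg : ∀ n, ‖g n‖ = 1)
    (hI : Tendsto (fun n => I (g n)) atTop (𝓝 0))
    (hW : Tendsto (fun n => W (g n) - z • g n) atTop (𝓝 0)) :
    z ∈ spectrum ℂ Hc := by
  refine mem_spectrum_of_approx Hc z (fun n => WithLp.toLp 2 (0, g n)) ?_ ?_
  · intro n
    have := WithLp.prod_norm_sq_eq_of_L2 (WithLp.toLp 2 ((0 : E), g n))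
    simp only [WithLp.toLp_fst, WithLp.toLp_snd, hg n, norm_zero] at this
    by_contra hlt
    push Not at hlt
    nlinarith [norm_nonneg (WithLp.toLp 2 ((0 : E), g n))]
  · refine tendsto_zero_iff_norm_tendsto_zero.1 (tendsto_pair ?_ ?_)
    · have := hI.const_smul s
      rw [smul_zero] at this
      refine this.congr fun n => ?_
      rw [WithLp.sub_fst, WithLp.smul_fst, h1]
      simp
    · refine hW.congr fun n => ?_
      rw [WithLp.sub_snd, WithLp.smul_snd, h2]
      simp

section H3sec
variable {d : ℕ}
def mk3 (a : ℂ) (f : L2 d) (g : L2two d) (hg : g ∈ symSub d) : H3 d :=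
  WithLp.toLp 2 (a, WithLp.toLp 2 (f, ⟨g, hg⟩))

@[simp] lemma p0_mk3 (a : ℂ) (f : L2 d) (g : L2two d) (hg : g ∈ symSub d) : p0 (mk3 a f g hg) = a := rfl
@[simp] lemma p1_mk3 (a : ℂ) (f : L2 d) (g : L2two d) (hg : g ∈ symSub d) : p1 (mk3 a f g hg) = f := rfl
@[simp] lemma p2_mk3 (a : ℂ) (f : L2 d) (g : L2two d) (hg : g ∈ symSub d) : p2 (mk3 a f g hg) = g := rfl

lemma norm3 (u : H3 d) : ‖u‖ ^ 2 = ‖p0 u‖ ^ 2 + (‖p1 u‖ ^ 2 + ‖p2 u‖ ^ 2) := by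
  rw [WithLp.prod_norm_sq_eq_of_L2, WithLp.prod_norm_sq_eq_of_L2]
  rfl

lemma inner3 (x u : H3 d) : inner ℂ x u =
    inner ℂ (p0 x) (p0 u) + (inner ℂ (p1 x) (p1 u) + inner ℂ (p2 x) (p2 u)) := by
  rw [WithLp.prod_inner_apply, WithLp.prod_inner_apply]
  rfl

lemma p0_sub_smul (x u : H3 d) (z : ℂ) : p0 (x - z • u) = p0 x - z * p0 u := rfl
lemma p1_sub_smul (x u : H3 d) (z : ℂ) : p1 (x - z • u) = p1 x - z • p1 u := rfl
lemma p2_sub_smul (x u : H3 d) (z : ℂ) : p2 (x - z • u) = p2 x - z • p2 u := rfl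

lemma tendsto3 {x : ℕ → H3 d} (h0 : Tendsto (fun n => p0 (x n)) atTop (𝓝 0))
    (h1 : Tendsto (fun n => p1 (x n)) atTop (𝓝 0)) (h2 : Tendsto (fun n => p2 (x n)) atTop (𝓝 0)) :
    Tendsto (fun n => ‖x n‖) atTop (𝓝 0) := by
  have := (h0.norm.pow 2).add ((h1.norm.pow 2).add (h2.norm.pow 2))
  have h3 := this.sqrt
  simp only [norm_zero] at h3
  have h4 : √((0:ℝ) ^ 2 + (0 ^ 2 + 0 ^ 2)) = 0 := by simp
  rw [h4] at h3
  refine h3.congr fun n => ?_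
  rw [← norm3, Real.sqrt_sq (norm_nonneg _)]

lemma norm_p0_le (u : H3 d) : ‖p0 u‖ ≤ ‖u‖ :=
  abs_le_of_sq_le_sq' (by nlinarith [norm3 u, sq_nonneg ‖p1 u‖, sq_nonneg ‖p2 u‖]) (norm_nonneg _) |>.2
lemma norm_p1_le (u : H3 d) : ‖p1 u‖ ≤ ‖u‖ :=
  abs_le_of_sq_le_sq' (by nlinarith [norm3 u, sq_nonneg ‖p0 u‖, sq_nonneg ‖p2 u‖]) (norm_nonneg _) |>.2
lemma norm_p2_le (u : H3 d) : ‖p2 u‖ ≤ ‖u‖ :=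
  abs_le_of_sq_le_sq' (by nlinarith [norm3 u, sq_nonneg ‖p1 u‖, sq_nonneg ‖p0 u‖]) (norm_nonneg _) |>.2

lemma mem_symSub {g : L2two d} (h : (fun x : Td d × Td d => g x.swap) =ᵐ[volume] g) : g ∈ symSub d := by
  rw [symSub, LinearMap.mem_ker, LinearMap.sub_apply, sub_eq_zero]
  refine Lp.ext ?_
  exact (Lp.coeFn_compMeasurePreserving g Measure.measurePreserving_swap).trans h

variable (w0 z : ℂ) (k0 v0 : L2 d) (M Q : L2 d →L[ℂ] L2 d) (I : L2two d →L[ℂ] L2 d)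
  (J J' : L2 d →L[ℂ] L2two d) (W R : L2two d →L[ℂ] L2two d) (H : H3 d →L[ℂ] H3 d)

lemma ham_not_ess 
    (h1 : ∀ f, p1 (H f) = p0 f • v0 + M (p1 f) + I (p2 f))
    (h2 : ∀ f, p2 (H f) = (1 / 2 : ℂ) • (J' (p1 f) + J (p1 f)) + W (p2 f))
    (hR1 : ∀ g, R (W g - z • g) = g) 
    (hQ1 : ∀ f, Q (M f - z • f - (1 / 2 : ℂ) • I (R (J f))) = f)
    (hK : ∀ f : ℕ → L2 d, (∀ n, ‖f n‖ ≤ 1) → (∀ x, Tendsto (fun n => inner ℂ x (f n)) atTop (𝓝 0)) →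
      Tendsto (fun n => I (R (J' (f n)))) atTop (𝓝 0)) : z ∉ essSpec H := by
  rintro ⟨u, hu, hlim⟩
  have hw := orthonormal_weak hu
  have hr1 : Tendsto (fun n => p1 (H (u n) - z • u n)) atTop (𝓝 0) :=
    squeeze_zero_norm (fun n => norm_p1_le _) hlim
  have hr2 : Tendsto (fun n => p2 (H (u n) - z • u n)) atTop (𝓝 0) :=
    squeeze_zero_norm (fun n => norm_p2_le _) hlim
  have ha : Tendsto (fun n => p0 (u n)) atTop (𝓝 0) := by
    have := hw (mk3 1 0 0 (Submodule.zero_mem _))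
    refine this.congr fun n => ?_
    rw [inner3]; simp
  have hfw : ∀ x, Tendsto (fun n => inner ℂ x (p1 (u n))) atTop (𝓝 0) := by
    intro x
    refine (hw (mk3 0 x 0 (Submodule.zero_mem _))).congr fun n => ?_
    rw [inner3]; simp
  have hk := hK (fun n => p1 (u n)) (fun n => (norm_p1_le _).trans (hu.1 n).le) hfw
  have hg : ∀ n, p2 (u n) = R (p2 (H (u n) - z • u n)) - (1 / 2 : ℂ) • R (J' (p1 (u n)))
      - (1 / 2 : ℂ) • R (J (p1 (u n))) := by
    intro n
    conv_lhs => rw [← hR1 (p2 (u n))]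
    rw [p2_sub_smul, h2]
    simp only [map_sub, map_add, map_smul]
    module
  have hf : Tendsto (fun n => p1 (u n)) atTop (𝓝 0) := by
    have key : ∀ n, M (p1 (u n)) - z • p1 (u n) - (1 / 2 : ℂ) • I (R (J (p1 (u n)))) =
        p1 (H (u n) - z • u n) - p0 (u n) • v0 - I (R (p2 (H (u n) - z • u n)))
          + (1 / 2 : ℂ) • I (R (J' (p1 (u n)))) := by
      intro n
      have e := congrArg I (hg n)
      simp only [map_sub, map_smul] at e
      rw [p1_sub_smul, h1, e]
      module
    have hlim2 : Tendsto (fun n => M (p1 (u n)) - z • p1 (u n) - (1 / 2 : ℂ) • I (R (J (p1 (u n)))))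
        atTop (𝓝 0) := by
      simp_rw [key]
      have := ((hr1.sub (ha.smul_const v0)).sub (((I.comp R).continuous.tendsto 0).comp hr2)).add
        (hk.const_smul (1 / 2 : ℂ))
      simpa using this
    have := (Q.continuous.tendsto 0).comp hlim2
    rw [map_zero] at this
    exact this.congr fun n => hQ1 _
  have hg0 : Tendsto (fun n => p2 (u n)) atTop (𝓝 0) := by
    simp_rw [hg]
    have := (((R.continuous.tendsto 0).comp hr2).sub
      ((((R.comp J').continuous.tendsto 0).comp hf).const_smul (1 / 2 : ℂ))).sub
      ((((R.comp J).continuous.tendsto 0).comp hf).const_smul (1 / 2 : ℂ))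
    simpa using this
  have := tendsto3 ha hf hg0
  simp only [hu.1] at this
  exact one_ne_zero (tendsto_nhds_unique tendsto_const_nhds this)

lemma ham_ess_Lam 
    (h0 : ∀ f, p0 (H f) = w0 * p0 f + inner ℂ k0 (p1 f))
    (h1 : ∀ f, p1 (H f) = p0 f • v0 + M (p1 f) + I (p2 f))
    (h2 : ∀ f, p2 (H f) = (1 / 2 : ℂ) • (J' (p1 f) + J (p1 f)) + W (p2 f))
    (hR2 : ∀ g, W (R g) - z • R g = g)
    (hsymR : ∀ f, R (J' f + J f) ∈ symSub d)
    (hK : ∀ f : ℕ → L2 d, (∀ n, ‖f n‖ ≤ 1) → (∀ x, Tendsto (fun n => inner ℂ x (f n)) atTop (𝓝 0)) →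
      Tendsto (fun n => I (R (J' (f n)))) atTop (𝓝 0)) (f : ℕ → L2 d) (hf : ∀ n, ‖f n‖ = 1)
    (hw : ∀ x, Tendsto (fun n => inner ℂ x (f n)) atTop (𝓝 0))
    (hS : Tendsto (fun n => M (f n) - z • f n - (1 / 2 : ℂ) • I (R (J (f n)))) atTop (𝓝 0)) :
    z ∈ essSpec H := by
  let T : L2 d →L[ℂ] L2two d := (-(1 / 2 : ℂ)) • R.comp (J' + J)
  have hT : ∀ f, T f = (-(1 / 2 : ℂ)) • R (J' f + J f) := fun f => rfl
  have hTs : ∀ f, T f ∈ symSub d := fun f => Submodule.smul_mem _ _ (hsymR f)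
  refine mem_essSpec_of_weak H z (fun n => mk3 0 (f n) (T (f n)) (hTs _)) ?_ ?_ ?_
  · intro n
    have := norm_p1_le (mk3 0 (f n) (T (f n)) (hTs _))
    rwa [p1_mk3, hf n] at this
  · intro x
    have := (hw (p1 x)).add (hw (ContinuousLinearMap.adjoint T (p2 x)))
    rw [add_zero] at this
    refine this.congr fun n => ?_
    rw [inner3, ContinuousLinearMap.adjoint_inner_left]
    simp
  · refine tendsto3 ?_ ?_ ?_
    · refine (hw k0).congr fun n => ?_
      rw [p0_sub_smul, h0]; simp
    · have := hS.sub ((hK f (fun n => (hf n).le) hw).const_smul (1 / 2 : ℂ))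
      rw [smul_zero, sub_zero] at this
      refine this.congr fun n => ?_
      rw [p1_sub_smul, h1]
      simp only [p0_mk3, p1_mk3, p2_mk3, hT, map_smul, map_add]
      module
    · refine tendsto_const_nhds.congr fun n => ?_
      rw [p2_sub_smul, h2]
      simp only [p0_mk3, p1_mk3, p2_mk3, hT, map_smul]
      have := hR2 (J' (f n) + J (f n))
      conv_rhs => enter [1, 1]; rw [← this]
      module

lemma ham_ess_band
    (h0 : ∀ f, p0 (H f) = w0 * p0 f + inner ℂ k0 (p1 f))
    (h1 : ∀ f, p1 (H f) = p0 f • v0 + M (p1 f) + I (p2 f))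
    (h2 : ∀ f, p2 (H f) = (1 / 2 : ℂ) • (J' (p1 f) + J (p1 f)) + W (p2 f))
    (g : ℕ → L2two d) (hg : ∀ n, ‖g n‖ = 1)
    (hw : ∀ x, Tendsto (fun n => inner ℂ x (g n)) atTop (𝓝 0))
    (hsy : ∀ n, g n ∈ symSub d)
    (hI : Tendsto (fun n => I (g n)) atTop (𝓝 0))
    (hW : Tendsto (fun n => W (g n) - z • g n) atTop (𝓝 0)) :
    z ∈ essSpec H := by
  refine mem_essSpec_of_weak H z (fun n => mk3 0 0 (g n) (hsy n)) ?_ ?_ ?_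
  · intro n
    have := norm_p2_le (mk3 0 0 (g n) (hsy n))
    rwa [p2_mk3, hg n] at this
  · intro x
    refine (hw (p2 x)).congr fun n => ?_
    rw [inner3]; simp
  · refine tendsto3 ?_ ?_ ?_
    · refine tendsto_const_nhds.congr fun n => ?_
      rw [p0_sub_smul, h0]; simp
    · refine hI.congr fun n => ?_
      rw [p1_sub_smul, h1]; simp
    · refine hW.congr fun n => ?_
      rw [p2_sub_smul, h2]; simp
end H3sec

instance nullCirc : NullSingletonClass (volume : Measure (AddCircle (2 * Real.pi))) := by
  refine ⟨fun x => ?_⟩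
  rw [← Metric.closedBall_zero, AddCircle.volume_closedBall]
  simp [Real.pi_pos.le]

section ops
variable {X : Type*} [TopologicalSpace X] [CompactSpace X] [LocallyCompactSpace X]
  [SecondCountableTopology X] [MeasureSpace X]
  [BorelSpace X] [IsFiniteMeasure (volume : Measure X)]

lemma mul_inv_op {Y : Type*} [MeasureSpace Y]
    {M Q : Lp ℂ 2 (volume : Measure Y) →L[ℂ] Lp ℂ 2 (volume : Measure Y)} {a b : Y → ℂ}
    (hM : ∀ f, M f =ᵐ[volume] fun x => a x * f x) (hQ : ∀ f, Q f =ᵐ[volume] fun x => b x * f x)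
    (hab : ∀ x, a x * b x = 1) (f) : M (Q f) = f := by
  refine Lp.ext ?_
  filter_upwards [hM (Q f), hQ f] with x h1 h2
  rw [h1, h2, ← mul_assoc, hab, one_mul]

lemma sub_smul_ae {Y : Type*} [MeasureSpace Y]
    {M : Lp ℂ 2 (volume : Measure Y) →L[ℂ] Lp ℂ 2 (volume : Measure Y)} {a : Y → ℂ} (z : ℂ)
    (hM : ∀ f, M f =ᵐ[volume] fun x => a x * f x) (f) :
    (M f - z • f : Lp ℂ 2 (volume : Measure Y)) =ᵐ[volume] fun x => (a x - z) * f x := by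
  filter_upwards [hM f, Lp.coeFn_sub (M f) (z • f), Lp.coeFn_smul z f] with x h1 h2 h3
  rw [h2, Pi.sub_apply, h1, h3, Pi.smul_apply, smul_eq_mul, sub_mul]

lemma exists_J {v : X → ℂ} (hv : Continuous v) :
    ∃ J J' : Lp ℂ 2 (volume : Measure X) →L[ℂ] Lp ℂ 2 (volume : Measure (X × X)),
      (∀ f, J f =ᵐ[volume] fun x => v x.2 * f x.1) ∧ (∀ f, J' f =ᵐ[volume] fun x => v x.1 * f x.2) := by
  obtain ⟨L1, h1⟩ := exists_lift (X := X) measurable_fst map_fst_vol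
  obtain ⟨L2, h2⟩ := exists_lift (X := X) measurable_snd map_snd_vol
  obtain ⟨M1, m1⟩ := exists_mulOp (Y := X × X) (a := fun x => v x.1) (by fun_prop)
  obtain ⟨M2, m2⟩ := exists_mulOp (Y := X × X) (a := fun x => v x.2) (by fun_prop)
  refine ⟨M2.comp L1, M1.comp L2, fun f => ?_, fun f => ?_⟩
  · filter_upwards [m2 (L1 f), h1 f] with x a b
    rw [ContinuousLinearMap.comp_apply, a, b]
  · filter_upwards [m1 (L2 f), h2 f] with x a b
    rw [ContinuousLinearMap.comp_apply, a, b]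

variable {v : X → ℂ} {r : X × X → ℂ} 
  {I : Lp ℂ 2 (volume : Measure (X × X)) →L[ℂ] Lp ℂ 2 (volume : Measure X)}
  {J J' : Lp ℂ 2 (volume : Measure X) →L[ℂ] Lp ℂ 2 (volume : Measure (X × X))}
  {R : Lp ℂ 2 (volume : Measure (X × X)) →L[ℂ] Lp ℂ 2 (volume : Measure (X × X))}

lemma IRJ (hI : ∀ f, I f =ᵐ[volume] fun p => ∫ t, v t * f (p, t))
    (hJ : ∀ f, J f =ᵐ[volume] fun x => v x.2 * f x.1)
    (hR : ∀ f, R f =ᵐ[volume] fun x => r x * f x) (f) :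
    I (R (J f)) =ᵐ[volume] fun p => (∫ t, v t ^ 2 * r (p, t)) * f p := by
  filter_upwards [hI (R (J f)), ae_fib (hR (J f)), ae_fib (hJ f)] with p h1 h2 h3
  rw [h1, ← integral_mul_const]
  refine integral_congr_ae ?_
  filter_upwards [h2, h3] with t h4 h5
  rw [h4, h5]; ring

lemma IRJ' (hI : ∀ f, I f =ᵐ[volume] fun p => ∫ t, v t * f (p, t))
    (hJ : ∀ f, J' f =ᵐ[volume] fun x => v x.1 * f x.2)
    (hR : ∀ f, R f =ᵐ[volume] fun x => r x * f x) (f) :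
    I (R (J' f)) =ᵐ[volume] fun p => ∫ t, (v t * r (p, t) * v p) * f t := by
  filter_upwards [hI (R (J' f)), ae_fib (hR (J' f)), ae_fib (hJ f)] with p h1 h2 h3
  rw [h1]
  refine integral_congr_ae ?_
  filter_upwards [h2, h3] with t h4 h5
  rw [h4, h5]; ring

lemma sym_R (hJ : ∀ f, J f =ᵐ[volume] fun x => v x.2 * f x.1)
    (hJ' : ∀ f, J' f =ᵐ[volume] fun x => v x.1 * f x.2)
    (hR : ∀ f, R f =ᵐ[volume] fun x => r x * f x) (hr : ∀ x, r x.swap = r x) (f) :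
    (fun x : X × X => R (J' f + J f) x.swap) =ᵐ[volume] R (J' f + J f) := by
  have h : R (J' f + J f) =ᵐ[volume] fun x => r x * (v x.1 * f x.2 + v x.2 * f x.1) := by
    filter_upwards [hR (J' f + J f), Lp.coeFn_add (J' f) (J f), hJ f, hJ' f] with x h1 h2 h3 h4
    rw [h1, h2, Pi.add_apply, h3, h4]
  have hs : MeasurePreserving Prod.swap (volume : Measure (X × X)) (volume : Measure (X × X)) :=
    Measure.measurePreserving_swap
  refine (hs.quasiMeasurePreserving.ae_eq_comp h).trans (EventuallyEq.trans ?_ h.symm)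
  refine Eventually.of_forall fun x => ?_
  simp only [Function.comp_apply, hr, Prod.fst_swap, Prod.snd_swap]
  ring

lemma cont_D (hv : Continuous v) (hr : Continuous r) :
    Continuous fun p => ∫ t, v t ^ 2 * r (p, t) := by
  have := continuous_parametric_integral_of_continuous (μ := (volume : Measure X))
    (f := fun p t => v t ^ 2 * r (p, t)) (by simp only [Function.uncurry_def]; fun_prop) isCompact_univ
  simpa using this
end ops

lemma mem_bigBand {d : ℕ} {w₂ : Td d → Td d → Td d → ℝ} {K : Td d}
    (hw : Continuous fun x : Td d × Td d => w₂ K x.1 x.2) {z : ℂ} :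
    z ∈ bigBand w₂ K ↔ ∃ x : Td d × Td d, (w₂ K x.1 x.2 : ℂ) = z := by
  have hbb : BddBelow (range fun x : Td d × Td d => w₂ K x.1 x.2) := (isCompact_range hw).bddBelow
  have hba : BddAbove (range fun x : Td d × Td d => w₂ K x.1 x.2) := (isCompact_range hw).bddAbove
  constructor
  · rintro ⟨e, ⟨h1, h2⟩, rfl⟩
    obtain ⟨x, -, hx⟩ := isCompact_univ.exists_isMinOn (s := (univ : Set (Td d × Td d))) univ_nonempty hw.continuousOn
    obtain ⟨y, -, hy⟩ := isCompact_univ.exists_isMaxOn (s := (univ : Set (Td d × Td d))) univ_nonempty hw.continuousOn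
    have h3 : w₂ K x.1 x.2 ≤ e := (le_ciInf fun t => hx (mem_univ t)).trans h1
    have h4 : e ≤ w₂ K y.1 y.2 := h2.trans (ciSup_le fun t => hy (mem_univ t))
    obtain ⟨t, ht⟩ := mem_range_of_exists_le_of_exists_ge hw ⟨x, h3⟩ ⟨y, h4⟩
    exact ⟨t, by rw [← ht]⟩
  · rintro ⟨x, rfl⟩
    exact ⟨_, ⟨ciInf_le hbb x, le_ciSup hba x⟩, rfl⟩

lemma band_sub {d : ℕ} {w₂ : Td d → Td d → Td d → ℝ} {K : Td d}
    (hw : Continuous fun x : Td d × Td d => w₂ K x.1 x.2) (k : Td d) :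
    bandKk w₂ K k ⊆ bigBand w₂ K := by
  have hbb : BddBelow (range fun x : Td d × Td d => w₂ K x.1 x.2) := (isCompact_range hw).bddBelow
  have hba : BddAbove (range fun x : Td d × Td d => w₂ K x.1 x.2) := (isCompact_range hw).bddAbove
  rintro _ ⟨e, ⟨h1, h2⟩, rfl⟩
  refine ⟨e, ⟨le_trans ?_ h1, h2.trans ?_⟩, rfl⟩
  · exact le_ciInf fun q => ciInf_le hbb (k, q)
  · exact ciSup_le fun q => le_ciSup hba (k, q)

theorem essSpec_eq_channel_spectrum_eq_SigK
    (d : ℕ) (hd : 1 ≤ d)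
    (w₀ v₀ v₁ : Td d → ℝ) (w₁ : Td d → Td d → ℝ) (w₂ : Td d → Td d → Td d → ℝ)
    (hw₀ : Continuous w₀) (hv₀ : Continuous v₀) (hv₁ : Continuous v₁)
    (hw₁ : Continuous fun x : Td d × Td d => w₁ x.1 x.2)
    (hw₂ : Continuous fun x : Td d × Td d × Td d => w₂ x.1 x.2.1 x.2.2)
    (hsym : ∀ K p q : Td d, w₂ K p q = w₂ K q p)
    (K : Td d)
    (H : H3 d →L[ℂ] H3 d) (hH : IsHamiltonian w₀ v₀ v₁ w₁ w₂ K H)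
    (Hc : HchSp d →L[ℂ] HchSp d) (hHc : IsChannel v₁ w₁ w₂ K Hc) :
    essSpec H = spectrum ℂ Hc ∧ spectrum ℂ Hc = SigK v₁ w₁ w₂ K := by
  haveI : Nonempty (Fin d) := ⟨⟨0, hd⟩⟩
  have hw : Continuous fun x : Td d × Td d => w₂ K x.1 x.2 :=
    hw₂.comp (continuous_const.prodMk (continuous_fst.prodMk continuous_snd))
  have hw1 : Continuous fun p : Td d => w₁ K p := hw₁.comp (continuous_const.prodMk continuous_id)
  have hwC : Continuous fun x : Td d × Td d => (w₂ K x.1 x.2 : ℂ) := continuous_ofReal.comp hw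
  have hw1C : Continuous fun p : Td d => (w₁ K p : ℂ) := continuous_ofReal.comp hw1
  have hvC : Continuous fun p : Td d => (v₁ p : ℂ) := continuous_ofReal.comp hv₁
  have hv0C : Continuous fun p : Td d => (v₀ p : ℂ) := continuous_ofReal.comp hv₀
  obtain ⟨M, hM⟩ := exists_mulOp hw1C
  obtain ⟨W, hW⟩ := exists_mulOp hwC
  obtain ⟨I, hI⟩ := exists_Iop hvC
  obtain ⟨J, J', hJ, hJ'⟩ := exists_J hvC
  obtain ⟨C0, hC0, hb0⟩ := exists_bd hv0C
  obtain ⟨k0, hk0, -⟩ := exists_ker hv0C hC0 hb0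
  have hv0m : MemLp (fun p : Td d => (v₀ p : ℂ)) 2 volume :=
    MemLp.of_bound hv0C.measurable.aestronglyMeasurable C0 (Eventually.of_forall hb0)
  set s : ℂ := (Real.sqrt 2 : ℂ)⁻¹ with hs
  have hs2 : s ^ 2 = 1 / 2 := by
    rw [hs, inv_pow, ← ofReal_pow, Real.sq_sqrt (by norm_num)]; norm_num
  have c1e : ∀ f : HchSp d, (Hc f).fst = M f.fst + s • I f.snd := by
    intro f
    refine Lp.ext ?_
    refine (hHc f).1.trans ?_
    filter_upwards [hM f.fst, hI f.snd, Lp.coeFn_add (M f.fst) (s • I f.snd),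
      Lp.coeFn_smul s (I f.snd)] with p h1 h2 h3 h4
    rw [h3, Pi.add_apply, h1, h4, Pi.smul_apply, h2]
    rfl
  have c2e : ∀ f : HchSp d, (Hc f).snd = s • J f.fst + W f.snd := by
    intro f
    refine Lp.ext ?_
    refine (hHc f).2.trans ?_
    filter_upwards [hJ f.fst, hW f.snd, Lp.coeFn_add (s • J f.fst) (W f.snd),
      Lp.coeFn_smul s (J f.fst)] with p h1 h2 h3 h4
    rw [h3, Pi.add_apply, h2, h4, Pi.smul_apply, h1, smul_eq_mul, ← mul_assoc]
    rfl
  have h0e : ∀ f, p0 (H f) = (w₀ K : ℂ) * p0 f + inner ℂ k0 (p1 f) := by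
    intro f
    rw [(hH f).1, hk0]
  have h1e : ∀ f, p1 (H f) = p0 f • hv0m.toLp _ + M (p1 f) + I (p2 f) := by
    intro f
    refine Lp.ext ?_
    refine (hH f).2.1.trans ?_
    filter_upwards [hM (p1 f), hI (p2 f), Lp.coeFn_add (p0 f • hv0m.toLp _ + M (p1 f)) (I (p2 f)),
      Lp.coeFn_add (p0 f • hv0m.toLp _) (M (p1 f)), Lp.coeFn_smul (p0 f) (hv0m.toLp _),
      hv0m.coeFn_toLp] with p h1 h2 h3 h4 h5 h6
    rw [h3, Pi.add_apply, h4, Pi.add_apply, h5, Pi.smul_apply, h6, h1, h2, smul_eq_mul, mul_comm (p0 f)]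
  have h2e : ∀ f, p2 (H f) = (1 / 2 : ℂ) • (J' (p1 f) + J (p1 f)) + W (p2 f) := by
    intro f
    refine Lp.ext ?_
    refine (hH f).2.2.trans ?_
    filter_upwards [hJ (p1 f), hJ' (p1 f), hW (p2 f),
      Lp.coeFn_add ((1 / 2 : ℂ) • (J' (p1 f) + J (p1 f))) (W (p2 f)),
      Lp.coeFn_smul (1 / 2 : ℂ) (J' (p1 f) + J (p1 f)),
      Lp.coeFn_add (J' (p1 f)) (J (p1 f))] with p h1 h2 h3 h4 h5 h6
    rw [h4, Pi.add_apply, h5, Pi.smul_apply, h6, Pi.add_apply, h1, h2, h3, smul_eq_mul]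
    ring
  have key : ∀ z, (z ∈ essSpec H ∧ z ∈ spectrum ℂ Hc ∧ z ∈ SigK v₁ w₁ w₂ K) ∨
      (z ∉ essSpec H ∧ z ∉ spectrum ℂ Hc ∧ z ∉ SigK v₁ w₁ w₂ K) := by
    intro z
    by_cases hz : z ∈ bigBand w₂ K
    · left
      obtain ⟨⟨p₀, q₀⟩, hx⟩ := (mem_bigBand hw).1 hz
      obtain ⟨g, hg1, hg2, hg3, hg4, hg5⟩ := conc2 p₀ q₀
      have hgI := hg5 _ hvC (fun n => I (g n)) (fun n => hI _)
      have hgW := hg4 (fun x => (w₂ K x.1 x.2 : ℂ) - z) (by fun_prop) (by simp [hx])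
        (by simp only; rw [hsym, hx, sub_self]) (fun n => W (g n) - z • g n) (fun n => sub_smul_ae z hW _)
      exact ⟨ham_ess_band _ z k0 _ M I J J' W H h0e h1e h2e g hg1 hg2 (fun n => mem_symSub (hg3 n)) hgI hgW,
        chan_spec_band Hc M I J W s z c1e c2e g hg1 hgI hgW, Or.inl hz⟩
    · have hne : ∀ x : Td d × Td d, (w₂ K x.1 x.2 : ℂ) - z ≠ 0 := fun x hx =>
        hz ((mem_bigBand hw).2 ⟨x, sub_eq_zero.1 hx⟩)
      have hrc : Continuous fun x : Td d × Td d => ((w₂ K x.1 x.2 : ℂ) - z)⁻¹ :=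
        (hwC.sub continuous_const).inv₀ hne
      obtain ⟨R, hR⟩ := exists_mulOp hrc
      have hR1 : ∀ g, R (W g - z • g) = g := by
        intro g
        refine Lp.ext ?_
        filter_upwards [hR (W g - z • g), sub_smul_ae z hW g] with x h1 h2
        rw [h1, h2, ← mul_assoc, inv_mul_cancel₀ (hne x), one_mul]
      have hR2 : ∀ g, W (R g) - z • R g = g := by
        intro g
        refine Lp.ext ?_
        filter_upwards [hR g, sub_smul_ae z hW (R g)] with x h1 h2
        rw [h2, h1, ← mul_assoc, mul_inv_cancel₀ (hne x), one_mul]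
      have hDc := cont_D hvC hrc
      let Δ : Td d → ℂ := fun p => (w₁ K p : ℂ) - z - 1 / 2 * ∫ t, (v₁ t : ℂ) ^ 2 * ((w₂ K p t : ℂ) - z)⁻¹
      have hΔ : ∀ p, Delta v₁ w₁ w₂ K p z = Δ p := fun p => by
        simp only [Delta, Δ, div_eq_mul_inv]
      have hΔc : Continuous Δ := (hw1C.sub continuous_const).sub (continuous_const.mul hDc)
      have hS : ∀ f, (M f - z • f - (1 / 2 : ℂ) • I (R (J f)) : L2 d) =ᵐ[volume] fun p => Δ p * f p := by
        intro f
        filter_upwards [sub_smul_ae z hM f, IRJ hI hJ hR f,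
          Lp.coeFn_sub (M f - z • f) ((1 / 2 : ℂ) • I (R (J f))),
          Lp.coeFn_smul (1 / 2 : ℂ) (I (R (J f)))] with p h1 h2 h3 h4
        rw [h3, Pi.sub_apply, h1, h4, Pi.smul_apply, h2, smul_eq_mul]
        simp only [Δ]; ring
      have hK : ∀ f : ℕ → L2 d, (∀ n, ‖f n‖ ≤ 1) →
          (∀ x, Tendsto (fun n => inner ℂ x (f n)) atTop (𝓝 0)) →
          Tendsto (fun n => I (R (J' (f n)))) atTop (𝓝 0) := by
        intro f hf hfw
        exact ker_weak (k := fun x : Td d × Td d => (v₁ x.2 : ℂ) * ((w₂ K x.1 x.2 : ℂ) - z)⁻¹ * v₁ x.1)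
          (by fun_prop) hf hfw (fun n => IRJ' hI hJ' hR (f n))
      have hsR : ∀ f, R (J' f + J f) ∈ symSub d := fun f =>
        mem_symSub (sym_R (v := fun p => (v₁ p : ℂ)) (r := fun x : Td d × Td d => ((w₂ K x.1 x.2 : ℂ) - z)⁻¹) hJ hJ' hR (fun x => by simp only [Prod.fst_swap, Prod.snd_swap]; rw [hsym]) f)
      by_cases hk : ∃ k, Δ k = 0
      · left
        obtain ⟨k, hk⟩ := hk
        obtain ⟨f, hf1, hf2, hf3⟩ := conc1 k
        have hf4 := hf3 Δ hΔc.continuousAt hk _ (fun n => hS (f n))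
        refine ⟨ham_ess_Lam _ z k0 _ M I J J' W R H h0e h1e h2e hR2 hsR hK f hf1 hf2 hf4,
          chan_spec_Lam Hc M I J W R s z c1e c2e hR2 f hf1 (by rw [hs2]; exact hf4),
          Or.inr ⟨k, fun hh => hz (band_sub hw k hh), (hΔ k).trans hk⟩⟩
      · right
        push Not at hk
        obtain ⟨Q, hQ⟩ := exists_mulOp (hΔc.inv₀ hk)
        have hQ1 : ∀ f, Q (M f - z • f - (1 / 2 : ℂ) • I (R (J f))) = f := by
          intro f
          refine Lp.ext ?_
          filter_upwards [hQ (M f - z • f - (1 / 2 : ℂ) • I (R (J f))), hS f] with p h1 h2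
          rw [h1, h2, ← mul_assoc, Pi.inv_apply, inv_mul_cancel₀ (hk p), one_mul]
        have hQ2 : ∀ f, M (Q f) - z • Q f - (1 / 2 : ℂ) • I (R (J (Q f))) = f := by
          intro f
          refine Lp.ext ?_
          filter_upwards [hQ f, hS (Q f)] with p h1 h2
          rw [h2, h1, ← mul_assoc, Pi.inv_apply, mul_inv_cancel₀ (hk p), one_mul]
        refine ⟨ham_not_ess z _ M Q I J J' W R H h1e h2e hR1 hQ1 hK,
          chan_not_spec Hc M I J W R Q s z c1e c2e hR1 hR2 (by rw [hs2]; exact hQ1) (by rw [hs2]; exact hQ2), ?_⟩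
        rintro (h | ⟨k, -, h⟩)
        · exact hz h
        · exact hk k ((hΔ k).symm.trans h)
  constructor
  · ext z
    rcases key z with ⟨a, b, c⟩ | ⟨a, b, c⟩
    · exact ⟨fun _ => b, fun _ => a⟩
    · exact ⟨fun h => absurd h a, fun h => absurd h b⟩
  · ext z
    rcases key z with ⟨a, b, c⟩ | ⟨a, b, c⟩
    · exact ⟨fun _ => c, fun _ => b⟩
    · exact ⟨fun h => absurd h b, fun h => absurd h c⟩
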